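/- Let n ≥ 3 be an integer, let p be a real with 2 < p < n, set α = −(n−1)/(p−1) and β = (n−2p+1)/(p−1) (so α + β = −2), and let ε > 0, r₀ > e. Suppose f : [0,∞) → ℝ is a warping function (C², f(0)=0, f'(0)=1, f(r) > 0 and f''(r) ≥ 0 for all r > 0) satisfying f''(r) ≥ ((1/2 + ε)/(r² log r)) · f(r) for all r ≥ r₀. Then ∫₁^∞ f(s)^{β} (∫_s^∞ f(t)^{α} dt) ds < ∞. -/

import Mathlib

open MeasureTheory Set

/-!
Convexity makes `f r / r` nondecreasing, so that `f t ≥ (f s / s) t` for `t ≥ s`; since `α < -1`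
and `α + β = -2`, the inner integral can be evaluated against this bound and the whole integral is
at most a constant times `∫ s / f(s)² ds`. The latter converges once `f` grows at least like
`r (log r)^a` for some `a > 1/2`. The curvature bound with constant `k > 1/2` provides this for
every `a < k` by Sturm comparison: with `g = r (log r)^a`, the Wronskian `f' g - f g'` has
derivative at least a positive multiple of `1 / r`, hence it tends to infinity, so `f / g` is
eventually nondecreasing.
-/

section SturmComparison

open Filter Asymptotics

theorem exists_monotoneOn_Ici_of_hasDerivAt_nonneg {u u' : ℝ → ℝ}
    (hu : ∀ᶠ x in atTop, HasDerivAt u (u' x) x) (hu' : ∀ᶠ x in atTop, 0 ≤ u' x) :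
    ∃ R, MonotoneOn u (Ici R) := by
  obtain ⟨R, hR⟩ := eventually_atTop.1 (hu.and hu')
  refine ⟨R, monotoneOn_of_deriv_nonneg (convex_Ici R)
    (fun x hx => (hR x hx).1.continuousAt.continuousWithinAt)
    (fun x hx => (hR x (interior_subset hx)).1.differentiableAt.differentiableWithinAt)
    fun x hx => ?_⟩
  rw [(hR x (interior_subset hx)).1.deriv]
  exact (hR x (interior_subset hx)).2

theorem tendsto_atTop_of_hasDerivAt_le {φ φ' ψ ψ' : ℝ → ℝ}
    (hφ : ∀ᶠ x in atTop, HasDerivAt φ (φ' x) x) (hψ : ∀ᶠ x in atTop, HasDerivAt ψ (ψ' x) x)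
    (hle : ∀ᶠ x in atTop, φ' x ≤ ψ' x) (hlim : Tendsto φ atTop atTop) :
    Tendsto ψ atTop atTop := by
  obtain ⟨R, hR⟩ := exists_monotoneOn_Ici_of_hasDerivAt_nonneg
    (hψ.mp (hφ.mono fun x hφx hψx => hψx.sub hφx)) (hle.mono fun x => sub_nonneg.2)
  refine tendsto_atTop_mono' atTop ?_ (tendsto_atTop_add_const_right _ (ψ R - φ R) hlim)
  filter_upwards [eventually_ge_atTop R] with x hx
  have hmono : ψ R - φ R ≤ ψ x - φ x := hR self_mem_Ici hx hx
  linarith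

variable {f f' f'' g g' g'' : ℝ → ℝ}

theorem isBigO_of_wronskian_nonneg (hf : ∀ᶠ x in atTop, HasDerivAt f (f' x) x)
    (hg : ∀ᶠ x in atTop, HasDerivAt g (g' x) x) (hfpos : ∀ᶠ x in atTop, 0 < f x)
    (hgpos : ∀ᶠ x in atTop, 0 < g x) (hW : ∀ᶠ x in atTop, 0 ≤ f' x * g x - f x * g' x) :
    g =O[atTop] f := by
  have hdiv : ∀ᶠ x in atTop,
      HasDerivAt (fun y => f y / g y) ((f' x * g x - f x * g' x) / g x ^ 2) x := by
    filter_upwards [hf, hg, hgpos] with x hfx hgx hgx_pos using hfx.div hgx hgx_pos.ne'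
  obtain ⟨R, hmono⟩ := exists_monotoneOn_Ici_of_hasDerivAt_nonneg hdiv
    (hW.mono fun x hx => div_nonneg hx (sq_nonneg _))
  obtain ⟨x₀, hx₀, hfx₀, hgx₀⟩ := ((eventually_ge_atTop R).and (hfpos.and hgpos)).exists
  refine IsBigO.of_bound (f x₀ / g x₀)⁻¹ ?_
  filter_upwards [eventually_ge_atTop x₀, hfpos, hgpos] with x hx hfx hgx
  have hratio : f x₀ / g x₀ ≤ f x / g x := hmono hx₀ (hx₀.trans hx) hx
  rw [Real.norm_of_nonneg hfx.le, Real.norm_of_nonneg hgx.le,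
    le_inv_mul_iff₀ (div_pos hfx₀ hgx₀)]
  exact (le_div_iff₀ hgx).1 hratio

theorem isBigO_of_le_deriv_wronskian {φ φ' : ℝ → ℝ}
    (hf : ∀ᶠ x in atTop, HasDerivAt f (f' x) x) (hf' : ∀ᶠ x in atTop, HasDerivAt f' (f'' x) x)
    (hg : ∀ᶠ x in atTop, HasDerivAt g (g' x) x) (hg' : ∀ᶠ x in atTop, HasDerivAt g' (g'' x) x)
    (hfpos : ∀ᶠ x in atTop, 0 < f x) (hgpos : ∀ᶠ x in atTop, 0 < g x)
    (hφ : ∀ᶠ x in atTop, HasDerivAt φ (φ' x) x) (hφlim : Tendsto φ atTop atTop)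
    (hle : ∀ᶠ x in atTop, φ' x ≤ f'' x * g x - f x * g'' x) :
    g =O[atTop] f := by
  have hW : ∀ᶠ x in atTop, HasDerivAt (fun y => f' y * g y - f y * g' y)
      (f'' x * g x - f x * g'' x) x := by
    filter_upwards [hf, hf', hg, hg'] with x hfx hf'x hgx hg'x
    exact ((hf'x.mul hgx).sub (hfx.mul hg'x)).congr_deriv (by ring)
  exact isBigO_of_wronskian_nonneg hf hg hfpos hgpos
    ((tendsto_atTop_of_hasDerivAt_le hφ hW hle hφlim).eventually_ge_atTop 0)

end SturmComparison

section LogPower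

open Filter Asymptotics Real

variable {a r : ℝ}

theorem hasDerivAt_log_rpow (hr : 1 < r) :
    HasDerivAt (fun x => log x ^ a) (a * log r ^ (a - 1) / r) r :=
  ((hasDerivAt_log (by positivity)).rpow_const (Or.inl (log_pos hr).ne')).congr_deriv
    (by ring)

theorem hasDerivAt_mul_log_rpow (hr : 1 < r) :
    HasDerivAt (fun x => x * log x ^ a) (log r ^ a + a * log r ^ (a - 1)) r :=
  ((hasDerivAt_id r).mul (hasDerivAt_log_rpow hr)).congr_deriv (by simp only [id]; field_simp)

theorem hasDerivAt_deriv_mul_log_rpow (hr : 1 < r) :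
    HasDerivAt (fun x => log x ^ a + a * log x ^ (a - 1))
      (a * log r ^ (a - 1) * (1 + (a - 1) / log r) / r) r :=
  ((hasDerivAt_log_rpow hr).add ((hasDerivAt_log_rpow hr).const_mul a)).congr_deriv (by
    rw [rpow_sub_one (log_pos hr).ne' (a - 1)]
    ring)

theorem integrableOn_Ioi_inv_mul_log_rpow {R b : ℝ} (hR : 1 < R) (hb : b < -1) :
    IntegrableOn (fun x => x⁻¹ * log x ^ b) (Ioi R) := by
  have hderiv : ∀ x ∈ Ici R,
      HasDerivAt (fun y => log y ^ (b + 1) / (b + 1)) (x⁻¹ * log x ^ b) x := fun x hx =>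
    ((hasDerivAt_log_rpow (hR.trans_le hx)).div_const (b + 1)).congr_deriv (by
      have : b + 1 ≠ 0 := by linarith
      rw [add_sub_cancel_right]
      field_simp)
  have hlim : Tendsto (fun x => log x ^ (b + 1) / (b + 1)) atTop (nhds (0 / (b + 1))) := by
    have := (tendsto_rpow_neg_atTop (y := -(b + 1)) (by linarith)).comp tendsto_log_atTop
    simp only [neg_neg] at this
    exact this.div_const _
  refine integrableOn_Ioi_deriv_of_nonneg' hderiv (fun x hx => ?_) hlim
  have hx1 : 1 < x := hR.trans hx
  have := log_pos hx1
  positivity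

theorem integrableOn_Ioi_id_div_sq {f : ℝ → ℝ} {x₀ : ℝ} (ha : 1 / 2 < a)
    (hf : ContinuousOn f (Ici x₀)) (hne : ∀ x ∈ Ici x₀, f x ≠ 0)
    (hgrowth : (fun x => x * log x ^ a) =O[atTop] f) :
    IntegrableOn (fun x => x / f x ^ 2) (Ioi x₀) := by
  have hloc : LocallyIntegrableOn (fun x => x / f x ^ 2) (Ici x₀) :=
    (continuousOn_id.div (hf.pow 2) fun x hx => pow_ne_zero 2 (hne x hx)).locallyIntegrableOn
      measurableSet_Ici
  have hinv : (fun x => (f x)⁻¹) =O[atTop] fun x => (x * log x ^ a)⁻¹ := by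
    refine hgrowth.inv_rev ?_
    filter_upwards [eventually_gt_atTop 1] with x hx hzero
    have := log_pos hx
    exact absurd hzero (by positivity)
  have hO : (fun x => x / f x ^ 2) =O[atTop] fun x => x⁻¹ * log x ^ (-(2 * a)) := by
    refine ((isBigO_refl (fun x : ℝ => x) atTop).mul (hinv.pow 2)).congr'
      (.of_forall fun x => by simp only [inv_pow, div_eq_mul_inv]) ?_
    filter_upwards [eventually_gt_atTop 1] with x hx
    have hlog := log_pos hx
    rw [rpow_neg hlog.le, two_mul, rpow_add hlog]
    field_simp
  have hatTop : IntegrableAtFilter (fun x => x⁻¹ * log x ^ (-(2 * a))) atTop :=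
    ⟨Ioi 2, Ioi_mem_atTop 2, integrableOn_Ioi_inv_mul_log_rpow one_lt_two (by linarith)⟩
  exact (hloc.integrableOn_of_isBigO_atTop hO hatTop).mono_set Ioi_subset_Ici_self

theorem eventually_inv_le_log_rpow (b : ℝ) : ∀ᶠ x in atTop, x⁻¹ ≤ log x ^ b := by
  have hlittle := (isLittleO_log_rpow_rpow_atTop (-b) one_pos).bound one_pos
  filter_upwards [hlittle, eventually_gt_atTop 1] with x hx hx1
  have hlog := log_pos hx1
  rw [rpow_one, one_mul, norm_of_nonneg (by positivity), norm_of_nonneg (by positivity),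
    rpow_neg hlog.le] at hx
  exact inv_le_of_inv_le₀ (by positivity) hx

/-- Here `F`, `F''` are the values at `x` of `f`, `f''`, and the right-hand side is the derivative
of the Wronskian of `f` and `g x = x * log x ^ a`; `hcoeff` says `g'' x ≤ m / (x² log x) * g x`. -/
theorem le_deriv_wronskian_mul_log_rpow {c k m x F F'' : ℝ} (hx : 1 < x) (hc : 0 ≤ c) (hmk : m ≤ k)
    (hlin : c * x ≤ F) (hcurv : k / (x ^ 2 * log x) * F ≤ F'')
    (hcoeff : a * (1 + (a - 1) / log x) ≤ m) (hinv : x⁻¹ ≤ log x ^ (a - 1)) :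
    (k - m) * c * x⁻¹ ≤ F'' * (x * log x ^ a)
      - F * (a * log x ^ (a - 1) * (1 + (a - 1) / log x) / x) := by
  have hlog := log_pos hx
  have : 0 ≤ k - m := sub_nonneg.2 hmk
  have hF : 0 ≤ F := (by positivity : 0 ≤ c * x).trans hlin
  have hF''g : k * log x ^ (a - 1) / x * F ≤ F'' * (x * log x ^ a) :=
    calc k * log x ^ (a - 1) / x * F
        = k / (x ^ 2 * log x) * F * (x * log x ^ a) := by
          rw [rpow_sub_one hlog.ne']; field_simp
      _ ≤ F'' * (x * log x ^ a) := by gcongr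
  have hFg'' : F * (a * log x ^ (a - 1) * (1 + (a - 1) / log x) / x)
      ≤ m * log x ^ (a - 1) / x * F :=
    calc F * (a * log x ^ (a - 1) * (1 + (a - 1) / log x) / x)
        = a * (1 + (a - 1) / log x) * log x ^ (a - 1) / x * F := by ring
      _ ≤ m * log x ^ (a - 1) / x * F := by gcongr
  calc (k - m) * c * x⁻¹
      ≤ (k - m) * c * log x ^ (a - 1) := by gcongr
    _ = (k - m) * log x ^ (a - 1) / x * (c * x) := by field_simp
    _ ≤ (k - m) * log x ^ (a - 1) / x * F := by gcongr
    _ = k * log x ^ (a - 1) / x * F - m * log x ^ (a - 1) / x * F := by ring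
    _ ≤ _ := sub_le_sub hF''g hFg''

theorem isBigO_mul_log_rpow_of_curvature {f f' f'' : ℝ → ℝ} {c k : ℝ} (hak : a < k) (hc : 0 < c)
    (hf : ∀ᶠ x in atTop, HasDerivAt f (f' x) x) (hf' : ∀ᶠ x in atTop, HasDerivAt f' (f'' x) x)
    (hlin : ∀ᶠ x in atTop, c * x ≤ f x)
    (hcurv : ∀ᶠ x in atTop, k / (x ^ 2 * log x) * f x ≤ f'' x) :
    (fun x => x * log x ^ a) =O[atTop] f := by
  obtain ⟨m, ham, hmk⟩ := exists_between hak
  have hgt := eventually_gt_atTop (1 : ℝ)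
  have hfpos : ∀ᶠ x in atTop, 0 < f x := by
    filter_upwards [hlin, hgt] with x hx hx1 using (by positivity : 0 < c * x).trans_le hx
  have hgpos : ∀ᶠ x in atTop, 0 < x * log x ^ a := by
    filter_upwards [hgt] with x hx
    have := log_pos hx
    positivity
  have hcoeff : ∀ᶠ x in atTop, a * (1 + (a - 1) / log x) ≤ m := by
    have hlim : Tendsto (fun x => a * (1 + (a - 1) / log x)) atTop (nhds (a * (1 + 0))) :=
      ((tendsto_log_atTop.const_div_atTop (a - 1)).const_add 1).const_mul a
    exact hlim.eventually_le_const (by simpa only [add_zero, mul_one])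
  refine isBigO_of_le_deriv_wronskian hf hf' (hgt.mono fun x => hasDerivAt_mul_log_rpow)
    (hgt.mono fun x => hasDerivAt_deriv_mul_log_rpow) hfpos hgpos
    (hgt.mono fun x hx => (hasDerivAt_log (by positivity)).const_mul ((k - m) * c))
    (tendsto_log_atTop.const_mul_atTop (mul_pos (sub_pos.2 hmk) hc)) ?_
  filter_upwards [hgt, hlin, hcurv, hcoeff, eventually_inv_le_log_rpow (a - 1)]
    with x hx hlin hcurv hcoeff hinv
  exact le_deriv_wronskian_mul_log_rpow hx hc.le hmk.le hlin hcurv hcoeff hinv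

end LogPower

section Convex

variable {f : ℝ → ℝ} {α β s : ℝ}

theorem convexOn_Ici_of_deriv_deriv_nonneg {x₀ : ℝ} (hf : ContDiff ℝ 2 f)
    (hf'' : ∀ x > x₀, 0 ≤ deriv (deriv f) x) : ConvexOn ℝ (Ici x₀) f :=
  convexOn_of_deriv2_nonneg (convex_Ici x₀) hf.continuous.continuousOn
    (hf.differentiable two_ne_zero).differentiableOn
    hf.differentiable_deriv_two.differentiableOn
    fun x hx => hf'' x (by rwa [interior_Ici] at hx)

theorem monotoneOn_div_id_of_convexOn (hf : ConvexOn ℝ (Ici 0) f) (hf0 : f 0 = 0) :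
    MonotoneOn (fun r => f r / r) (Ioi 0) := fun x hx y hy hxy => by
  simpa only [hf0, sub_zero] using hf.secant_mono self_mem_Ici (Ioi_subset_Ici_self hx)
    (Ioi_subset_Ici_self hy) (ne_of_gt hx) (ne_of_gt hy) hxy

theorem lintegral_Ioi_rpow_le (hα : α < -1) (hmono : MonotoneOn (fun r => f r / r) (Ioi 0))
    (hs : 0 < s) (hfs : 0 < f s) :
    ∫⁻ t in Ioi s, ENNReal.ofReal (f t ^ α) ≤ ENNReal.ofReal (s * f s ^ α / -(α + 1)) := by
  have hbound : ∀ t ∈ Ioi s, f t ^ α ≤ (f s / s) ^ α * t ^ α := fun t ht => by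
    have ht0 : 0 < t := hs.trans ht
    have hline : f s / s * t ≤ f t := (le_div_iff₀ ht0).1 (hmono hs ht0 (le_of_lt ht))
    rw [← Real.mul_rpow (by positivity) ht0.le]
    exact Real.rpow_le_rpow_of_nonpos (by positivity) hline (by linarith)
  calc ∫⁻ t in Ioi s, ENNReal.ofReal (f t ^ α)
      ≤ ∫⁻ t in Ioi s, ENNReal.ofReal ((f s / s) ^ α * t ^ α) :=
        setLIntegral_mono' measurableSet_Ioi fun t ht => ENNReal.ofReal_le_ofReal (hbound t ht)
    _ = ENNReal.ofReal (∫ t in Ioi s, (f s / s) ^ α * t ^ α) := by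
        refine (ofReal_integral_eq_lintegral_ofReal
          ((integrableOn_Ioi_rpow_of_lt hα hs).const_mul _) ?_).symm
        filter_upwards [ae_restrict_mem measurableSet_Ioi] with t ht
        have ht0 : 0 < t := hs.trans ht
        simp only [Pi.zero_apply]
        positivity
    _ = ENNReal.ofReal (s * f s ^ α / -(α + 1)) := by
        rw [integral_const_mul, integral_Ioi_rpow_of_lt hα hs, Real.div_rpow hfs.le hs.le,
          Real.rpow_add_one hs.ne', div_neg]
        congr 1
        field_simp

theorem ofReal_rpow_mul_lintegral_Ioi_rpow_le (hα : α < -1) (hαβ : α + β = -2)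
    (hmono : MonotoneOn (fun r => f r / r) (Ioi 0)) (hs : 0 < s) (hfs : 0 < f s) :
    ENNReal.ofReal (f s ^ β) * ∫⁻ t in Ioi s, ENNReal.ofReal (f t ^ α)
      ≤ ENNReal.ofReal ((-(α + 1))⁻¹ * (s / f s ^ 2)) := by
  have hpow : f s ^ β * f s ^ α = (f s ^ 2)⁻¹ := by
    rw [← Real.rpow_add hfs, add_comm, hαβ, Real.rpow_neg hfs.le, Real.rpow_two]
  calc ENNReal.ofReal (f s ^ β) * ∫⁻ t in Ioi s, ENNReal.ofReal (f t ^ α)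
      ≤ ENNReal.ofReal (f s ^ β) * ENNReal.ofReal (s * f s ^ α / -(α + 1)) := by
        gcongr
        exact lintegral_Ioi_rpow_le hα hmono hs hfs
    _ = ENNReal.ofReal (f s ^ β * (s * f s ^ α / -(α + 1))) :=
        (ENNReal.ofReal_mul (by positivity)).symm
    _ = ENNReal.ofReal ((-(α + 1))⁻¹ * (s / f s ^ 2)) := by
        rw [show f s ^ β * (s * f s ^ α / -(α + 1))
          = (-(α + 1))⁻¹ * (s * (f s ^ β * f s ^ α)) by ring, hpow, ← div_eq_mul_inv]

end Convex

open Filter in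
theorem stmt_2_general {α β k : ℝ} (hα : α < -1) (hαβ : α + β = -2) (hk : 1 / 2 < k)
    {f f' f'' : ℝ → ℝ} (hconv : ConvexOn ℝ (Ici 0) f) (hf0 : f 0 = 0)
    (hfpos : ∀ r > (0 : ℝ), 0 < f r)
    (hf' : ∀ᶠ r in atTop, HasDerivAt f (f' r) r) (hf'' : ∀ᶠ r in atTop, HasDerivAt f' (f'' r) r)
    (hcurv : ∀ᶠ r in atTop, k / (r ^ 2 * Real.log r) * f r ≤ f'' r) :
    (∫⁻ s in Ioi (1 : ℝ),
        ENNReal.ofReal (f s ^ β) * ∫⁻ t in Ioi s, ENNReal.ofReal (f t ^ α)) < ⊤ := by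
  have hmono := monotoneOn_div_id_of_convexOn hconv hf0
  have hlin : ∀ᶠ r in atTop, f 1 * r ≤ f r := by
    filter_upwards [eventually_ge_atTop 1] with r hr
    have hr0 : 0 < r := one_pos.trans_le hr
    simpa only [div_one, le_div_iff₀ hr0] using hmono (mem_Ioi.2 one_pos) hr0 hr
  have hcont : ContinuousOn f (Ioi 0) := by
    simpa only [interior_Ici] using hconv.continuousOn_interior
  obtain ⟨a, ha, hak⟩ := exists_between hk
  have hint : IntegrableOn (fun s => s / f s ^ 2) (Ioi 1) :=
    integrableOn_Ioi_id_div_sq ha (hcont.mono (Ici_subset_Ioi.2 one_pos))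
      (fun r hr => (hfpos r (one_pos.trans_le hr)).ne')
      (isBigO_mul_log_rpow_of_curvature hak (hfpos 1 one_pos) hf' hf'' hlin hcurv)
  calc (∫⁻ s in Ioi (1 : ℝ), ENNReal.ofReal (f s ^ β) * ∫⁻ t in Ioi s, ENNReal.ofReal (f t ^ α))
      ≤ ∫⁻ s in Ioi (1 : ℝ), ENNReal.ofReal ((-(α + 1))⁻¹ * (s / f s ^ 2)) :=
        setLIntegral_mono' measurableSet_Ioi fun s hs =>
          have hs0 : 0 < s := one_pos.trans hs
          ofReal_rpow_mul_lintegral_Ioi_rpow_le hα hαβ hmono hs0 (hfpos s hs0)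
    _ < ⊤ := (hint.const_mul _).lintegral_lt_top

/-- For `2 < p < n`, `α = -(n-1)/(p-1)`, `β = (n-2p+1)/(p-1)` and a warping
function `f` satisfying the curvature bound `f''(r) ≥ ((1/2+ε)/(r² log r)) f(r)` for
`r ≥ r₀ > e`, the integral `∫₁^∞ f(s)^β (∫ₛ^∞ f(t)^α dt) ds` is finite. -/
theorem stmt_2 (n : ℕ) (hn : 3 ≤ n) (p : ℝ) (hp : 2 < p) (hpn : p < n)
    (α β : ℝ) (hα : α = -((n : ℝ) - 1) / (p - 1)) (hβ : β = ((n : ℝ) - 2 * p + 1) / (p - 1))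
    (ε r₀ : ℝ) (hε : 0 < ε) (hr₀ : Real.exp 1 < r₀)
    (f : ℝ → ℝ) (hf : ContDiff ℝ 2 f) (hf0 : f 0 = 0) (hf'0 : deriv f 0 = 1)
    (hfpos : ∀ r > (0:ℝ), 0 < f r) (hfconv : ∀ r > (0:ℝ), 0 ≤ deriv (deriv f) r)
    (hcurv : ∀ r ≥ r₀, ((1/2 + ε) / (r ^ 2 * Real.log r)) * f r ≤ deriv (deriv f) r) :
    (∫⁻ s in Ioi (1:ℝ),
        ENNReal.ofReal (f s ^ β) * ∫⁻ t in Ioi s, ENNReal.ofReal (f t ^ α)) < ⊤ := by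
  have hp1 : 0 < p - 1 := by linarith
  have hα1 : α < -1 := by rw [hα, div_lt_iff₀ hp1]; linarith
  have hαβ : α + β = -2 := by rw [hα, hβ]; field_simp; ring
  exact stmt_2_general hα1 hαβ (lt_add_of_pos_right _ hε)
    (convexOn_Ici_of_deriv_deriv_nonneg hf hfconv) hf0 hfpos
    (.of_forall fun r => (hf.differentiable two_ne_zero r).hasDerivAt)
    (.of_forall fun r => (hf.differentiable_deriv_two r).hasDerivAt)
    (Filter.eventually_atTop.2 ⟨r₀, hcurv⟩)
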